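/- Let ψ : ℝ^d → ℝ be a nonzero bounded continuous positive definite function with ψ ∈ C_0(ℝ^d) and let k(x,y) = ψ(x − y). Then k is c0-universal if and only if k is characteristic to the set of all Borel probability measures on ℝ^d. -/

import Mathlib

open MeasureTheory Filter Topology RealInnerProductSpace
open scoped ZeroAtInfty

open scoped BoundedContinuousFunction CompactlySupported

/-!
By Hahn–Banach and the Riesz representation theorem, a kernel is c₀-universal if and only if no
nonzero finite signed measure `μ - ν` has mean embedding zero. Being characteristic says this only
for signed measures of total mass zero. For a translation-invariant kernel, however, if `μ - ν` has
mean embedding zero, then so has its difference with any of its translates; this difference has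
total mass zero, so it vanishes. Hence `μ - ν` is translation invariant, and on a noncompact group
it must be zero, because the integrals of a function in `C₀` against the translates of a finite
measure tend to zero at infinity.
-/

section HahnBanach

variable {V : Type*} [AddCommGroup V] [Module ℝ V] [TopologicalSpace V] [IsTopologicalAddGroup V]
  [ContinuousSMul ℝ V] [LocallyConvexSpace ℝ V]

theorem mem_topologicalClosure_of_forall_strongDual_eq_zero (W : Submodule ℝ V) {v : V}
    (h : ∀ L : StrongDual ℝ V, (∀ w ∈ W, L w = 0) → L v = 0) : v ∈ W.topologicalClosure := by
  by_contra hv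
  obtain ⟨L, u, hLu, huv⟩ := geometric_hahn_banach_closed_point
    W.topologicalClosure.convex W.isClosed_topologicalClosure hv
  have hu : 0 < u := by simpa using hLu 0 (zero_mem _)
  have hLW (w : V) (hw : w ∈ W) : L w = 0 := by
    by_contra hne
    have := hLu ((u / L w) • w) (W.le_topologicalClosure (W.smul_mem _ hw))
    rw [map_smul, smul_eq_mul, div_mul_cancel₀ _ hne] at this
    exact this.false
  exact (hu.trans huv).ne' (h L hLW)

end HahnBanach

section NormedLattice

theorem posPart_add_le {G : Type*} [AddCommGroup G] [Lattice G] [AddLeftMono G] (f g : G) :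
    (f + g)⁺ ≤ f⁺ + g⁺ :=
  sup_le (add_le_add (le_posPart f) (le_posPart g))
    (add_nonneg (posPart_nonneg f) (posPart_nonneg g))

theorem posPart_smul_of_pos {𝕜 V : Type*} [Field 𝕜] [LinearOrder 𝕜] [IsStrictOrderedRing 𝕜]
    [AddCommGroup V] [Lattice V] [Module 𝕜 V] [PosSMulMono 𝕜 V] {c : 𝕜} (hc : 0 < c) (f : V) :
    (c • f)⁺ = c • f⁺ := by
  calc (c • f)⁺ = c • f ⊔ c • (0 : V) := by rw [smul_zero, posPart_def]
    _ = c • f⁺ := ((OrderIso.smulRight hc).map_sup f 0).symm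

theorem norm_le_norm_of_nonneg_of_le {V : Type*} [NormedAddCommGroup V] [Lattice V]
    [HasSolidNorm V] [AddLeftMono V] {f g : V} (hf : 0 ≤ f) (hfg : f ≤ g) : ‖f‖ ≤ ‖g‖ :=
  norm_le_norm_of_abs_le_abs (by rwa [abs_of_nonneg hf, abs_of_nonneg (hf.trans hfg)])

variable {V : Type*} [NormedAddCommGroup V] [Lattice V] [HasSolidNorm V] [IsOrderedAddMonoid V]
  [NormedSpace ℝ V] [PosSMulMono ℝ V]

theorem exists_linearMap_prod_le_norm_posPart_add (L : StrongDual ℝ V) :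
    ∃ G : V × V →ₗ[ℝ] ℝ, (∀ f, G (f, -f) = L f) ∧ ∀ p, G p ≤ ‖L‖ * ‖p.1⁺ + p.2⁺‖ := by
  -- `N` vanishes on the negative cone, so any linear functional below it is positive.
  let N : V × V → ℝ := fun p ↦ ‖L‖ * ‖p.1⁺ + p.2⁺‖
  let antidiagonal : V →ₗ[ℝ] V × V := LinearMap.id.prod (-LinearMap.id)
  let F : (V × V) →ₗ.[ℝ] ℝ :=
    ⟨LinearMap.range antidiagonal, L.toLinearMap ∘ₗ LinearMap.fst ℝ V V ∘ₗ Submodule.subtype _⟩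
  have hN_smul (c : ℝ) (hc : 0 < c) (p : V × V) : N (c • p) = c * N p := by
    simp only [N, Prod.smul_fst, Prod.smul_snd, posPart_smul_of_pos hc, ← smul_add,
      norm_smul_of_nonneg hc.le, mul_left_comm]
  have hN_add (p q : V × V) : N (p + q) ≤ N p + N q := by
    have hle : (p + q).1⁺ + (p + q).2⁺ ≤ (p.1⁺ + p.2⁺) + (q.1⁺ + q.2⁺) :=
      (add_le_add (posPart_add_le _ _) (posPart_add_le _ _)).trans_eq (add_add_add_comm _ _ _ _)
    calc N (p + q) ≤ ‖L‖ * ‖(p.1⁺ + p.2⁺) + (q.1⁺ + q.2⁺)‖ := by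
          gcongr ‖L‖ * ?_
          exact norm_le_norm_of_nonneg_of_le (add_nonneg (posPart_nonneg _) (posPart_nonneg _)) hle
      _ ≤ ‖L‖ * (‖p.1⁺ + p.2⁺‖ + ‖q.1⁺ + q.2⁺‖) := by gcongr; exact norm_add_le _ _
      _ = N p + N q := mul_add _ _ _
  have hFN : ∀ p : F.domain, F p ≤ N p := by
    rintro ⟨_, f, rfl⟩
    calc L f ≤ ‖L‖ * ‖f‖ := (le_abs_self _).trans (L.le_opNorm f)
      _ = ‖L‖ * ‖f⁺ + (-f)⁺‖ := by rw [posPart_neg, posPart_add_negPart, norm_abs_eq_norm]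
  obtain ⟨G, hGF, hGN⟩ := exists_extension_of_le_sublinear F N hN_smul hN_add hFN
  exact ⟨G, fun f ↦ hGF ⟨antidiagonal f, f, rfl⟩, hGN⟩

theorem exists_positiveLinearMap_sub_eq (L : StrongDual ℝ V) :
    ∃ A B : V →ₚ[ℝ] ℝ, ∀ f, L f = A f - B f := by
  obtain ⟨G, hGL, hG⟩ := exists_linearMap_prod_le_norm_posPart_add L
  have nonneg_of_nonneg (p : V × V) (hp : 0 ≤ p) : 0 ≤ G p := by
    simpa [posPart_eq_zero.mpr (neg_nonpos.mpr hp.1), posPart_eq_zero.mpr (neg_nonpos.mpr hp.2)]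
      using hG (-p)
  refine ⟨.mk₀ (G ∘ₗ LinearMap.inl ℝ V V) fun f hf ↦ nonneg_of_nonneg _ ⟨hf, le_rfl⟩,
    .mk₀ (G ∘ₗ LinearMap.inr ℝ V V) fun f hf ↦ nonneg_of_nonneg _ ⟨le_rfl, hf⟩, fun f ↦ ?_⟩
  calc L f = G ((f, 0) - (0, f)) := by simp [← hGL]
    _ = G (f, 0) - G (0, f) := map_sub G _ _

end NormedLattice

section Riesz

variable {X : Type*} [TopologicalSpace X]

instance : PosSMulMono ℝ (X →ᵇ ℝ) where
  smul_le_smul_of_nonneg_left _ hc _ _ hfg x := mul_le_mul_of_nonneg_left (hfg x) hc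

theorem abs_positiveLinearMap_apply_le (A : (X →ᵇ ℝ) →ₚ[ℝ] ℝ) (f : X →ᵇ ℝ) :
    |A f| ≤ A 1 * ‖f‖ := by
  have hle : f ≤ ‖f‖ • 1 := fun x ↦ by simpa using f.apply_le_norm x
  have hge : -(‖f‖ • 1) ≤ f := fun x ↦ by simpa using f.neg_norm_le_apply x
  rw [abs_le, mul_comm, ← smul_eq_mul, ← map_smul, ← map_neg]
  exact ⟨OrderHomClass.mono A hge, OrderHomClass.mono A hle⟩

theorem continuous_positiveLinearMap (A : (X →ᵇ ℝ) →ₚ[ℝ] ℝ) : Continuous A :=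
  AddMonoidHomClass.continuous_of_bound A (A 1) (abs_positiveLinearMap_apply_le A)

theorem isCompact_setOf_le_abs (f : C₀(X, ℝ)) {ε : ℝ} (hε : 0 < ε) :
    IsCompact {x | ε ≤ |f x|} := by
  have hf : ∀ᶠ x in cocompact X, |f x| < ε := by
    simpa using (zero_at_infty f).eventually (Metric.ball_mem_nhds 0 hε)
  obtain ⟨K, hK, hKf⟩ := mem_cocompact'.mp hf
  exact hK.of_isClosed_subset (isClosed_le continuous_const (map_continuous f).abs)
    fun _ (hx : ε ≤ |f _|) ↦ hKf hx.not_gt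

theorem toBCF_mem_closure_range_toBoundedContinuousFunction (f : C₀(X, ℝ)) :
    f.toBCF ∈ closure (Set.range fun g : C_c(X, ℝ) ↦ g.toBoundedContinuousFunction) := by
  refine Metric.mem_closure_range_iff.mpr fun ε hε ↦ ?_
  have hδ : 0 < ε / 2 := half_pos hε
  set δ := ε / 2
  have hcomp : IsCompact {x | δ ≤ |f x|} := isCompact_setOf_le_abs f hδ
  let g : C_c(X, ℝ) :=
    { toFun x := f x - max (-δ) (min (f x) δ)
      hasCompactSupport' :=
        .intro' hcomp (isClosed_le (by fun_prop) (by fun_prop)) fun x (hx : ¬δ ≤ |f x|) ↦ by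
          obtain ⟨hx₁, hx₂⟩ := abs_lt.mp (not_le.mp hx)
          rw [min_eq_left hx₂.le, max_eq_right hx₁.le, sub_self] }
  have hfg (x : X) : |f x - g x| ≤ δ := by
    change |f x - (f x - max (-δ) (min (f x) δ))| ≤ δ
    rw [sub_sub_cancel, abs_le]
    exact ⟨le_max_left _ _, max_le (by linarith) (min_le_right _ _)⟩
  exact ⟨g, ((BoundedContinuousFunction.dist_le hδ.le).mpr hfg).trans_lt (half_lt_self hε)⟩

theorem continuous_integral_boundedContinuousFunction [MeasurableSpace X] [OpensMeasurableSpace X]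
    (μ : Measure X) [IsFiniteMeasure μ] : Continuous fun f : X →ᵇ ℝ ↦ ∫ x, f x ∂μ :=
  continuous_positiveLinearMap <| PositiveLinearMap.mk₀
    { toFun f := ∫ x, f x ∂μ
      map_add' f g := integral_add (f.integrable μ) (g.integrable μ)
      map_smul' c f := integral_const_mul c f }
    fun _ hf ↦ integral_nonneg hf

variable [T2Space X] [LocallyCompactSpace X] [MeasurableSpace X] [BorelSpace X]

theorem isFiniteMeasure_rieszMeasure (A : (X →ᵇ ℝ) →ₚ[ℝ] ℝ) (Λ : C_c(X, ℝ) →ₚ[ℝ] ℝ)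
    (hΛ : ∀ f, Λ f = A f.toBoundedContinuousFunction) :
    IsFiniteMeasure (RealRMK.rieszMeasure Λ) := by
  have measure_le_of_isCompact (K : Set X) (hK : IsCompact K) :
      RealRMK.rieszMeasure Λ K ≤ ENNReal.ofReal (A 1) := by
    obtain ⟨f, hf_one, -, hf_supp, hf_mem⟩ :=
      exists_continuous_one_zero_of_isCompact hK isClosed_empty (Set.disjoint_empty K)
    let g : C_c(X, ℝ) := ⟨f, hf_supp⟩
    calc RealRMK.rieszMeasure Λ K ≤ ENNReal.ofReal (Λ g) :=
          RealRMK.rieszMeasure_le_of_eq_one Λ (fun x ↦ (hf_mem x).1) hK hf_one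
      _ ≤ ENNReal.ofReal (A 1) := by
          rw [hΛ]
          exact ENNReal.ofReal_le_ofReal (OrderHomClass.mono A fun x ↦ (hf_mem x).2)
  refine ⟨lt_of_le_of_lt ?_ (ENNReal.ofReal_lt_top (r := A 1))⟩
  rw [isOpen_univ.measure_eq_iSup_isCompact]
  exact iSup₂_le fun K _ ↦ iSup_le (measure_le_of_isCompact K)

theorem exists_isFiniteMeasure_integral_eq_positiveLinearMap (A : (X →ᵇ ℝ) →ₚ[ℝ] ℝ) :
    ∃ μ : Measure X, IsFiniteMeasure μ ∧ ∀ f : C₀(X, ℝ), ∫ x, f x ∂μ = A f.toBCF := by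
  let Λ : C_c(X, ℝ) →ₚ[ℝ] ℝ := PositiveLinearMap.mk₀
    { toFun f := A f.toBoundedContinuousFunction
      map_add' f g := map_add A f.toBoundedContinuousFunction g.toBoundedContinuousFunction
      map_smul' c f := map_smul A c f.toBoundedContinuousFunction }
    fun f hf ↦ map_nonneg A hf
  set μ := RealRMK.rieszMeasure Λ
  have hμ : IsFiniteMeasure μ := isFiniteMeasure_rieszMeasure A Λ fun _ ↦ rfl
  have hclosed : IsClosed {f : X →ᵇ ℝ | ∫ x, f x ∂μ = A f} :=
    isClosed_eq (continuous_integral_boundedContinuousFunction μ) (continuous_positiveLinearMap A)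
  refine ⟨μ, hμ, fun f ↦ closure_minimal ?_ hclosed
    (toBCF_mem_closure_range_toBoundedContinuousFunction f)⟩
  rintro _ ⟨g, rfl⟩
  exact RealRMK.integral_rieszMeasure Λ g

theorem exists_isFiniteMeasure_integral_sub_eq (L : StrongDual ℝ (X →ᵇ ℝ)) :
    ∃ μ ν : Measure X, IsFiniteMeasure μ ∧ IsFiniteMeasure ν ∧
      ∀ f : C₀(X, ℝ), L f.toBCF = ∫ x, f x ∂μ - ∫ x, f x ∂ν := by
  obtain ⟨A, B, hL⟩ := exists_positiveLinearMap_sub_eq L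
  obtain ⟨μ, hμ, hμA⟩ := exists_isFiniteMeasure_integral_eq_positiveLinearMap A
  obtain ⟨ν, hν, hνB⟩ := exists_isFiniteMeasure_integral_eq_positiveLinearMap B
  exact ⟨μ, ν, hμ, hν, fun f ↦ by rw [hμA, hνB, hL]⟩

end Riesz

theorem isCountablyGenerated_cocompact (X : Type*) [TopologicalSpace X]
    [WeaklyLocallyCompactSpace X] [SigmaCompactSpace X] : (cocompact X).IsCountablyGenerated := by
  let K : CompactExhaustion X := CompactExhaustion.choice X
  have hK : (cocompact X).HasBasis (fun _ : ℕ ↦ True) fun n ↦ (K n)ᶜ := by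
    refine hasBasis_cocompact.to_hasBasis (fun s hs ↦ ?_) fun n _ ↦ ⟨K n, K.isCompact n, subset_rfl⟩
    obtain ⟨n, hn⟩ := K.exists_superset_of_isCompact hs
    exact ⟨n, trivial, Set.compl_subset_compl.mpr hn⟩
  exact hK.isCountablyGenerated

section Translates

theorem integral_map_add_right {E F : Type*} [AddGroup E] [MeasurableSpace E] [MeasurableAdd E]
    [NormedAddCommGroup F] [NormedSpace ℝ F] (f : E → F) (ρ : Measure E) (a : E) :
    ∫ x, f x ∂ρ.map (· + a) = ∫ x, f (x + a) ∂ρ :=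
  integral_map_equiv (MeasurableEquiv.addRight a) f

variable {E : Type*} [AddGroup E] [TopologicalSpace E] [IsTopologicalAddGroup E]
  [LocallyCompactSpace E] [SecondCountableTopology E] [MeasurableSpace E] [BorelSpace E]

theorem tendsto_integral_add_right_cocompact (f : C₀(E, ℝ)) (ρ : Measure E) [IsFiniteMeasure ρ] :
    Tendsto (fun a ↦ ∫ x, f (x + a) ∂ρ) (cocompact E) (𝓝 0) := by
  have := isCountablyGenerated_cocompact E
  rw [← integral_zero E ℝ (μ := ρ)]
  refine tendsto_integral_filter_of_dominated_convergence (fun _ ↦ ‖f‖)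
    (.of_forall fun a ↦ Continuous.aestronglyMeasurable (by fun_prop))
    (.of_forall fun a ↦ .of_forall fun x ↦ f.toBCF.norm_coe_le_norm _) (integrable_const _)
    (.of_forall fun x ↦ (zero_at_infty f).comp ?_)
  exact (Homeomorph.addLeft x).isClosedEmbedding.tendsto_cocompact

theorem eq_of_forall_add_map_add_right_eq [T2Space E] [NoncompactSpace E] {μ ν : Measure E}
    [IsFiniteMeasure μ] [IsFiniteMeasure ν]
    (h : ∀ a, μ + ν.map (· + a) = ν + μ.map (· + a)) : μ = ν := by
  refine Measure.ext_of_integral_eq_on_compactlySupported fun g ↦ ?_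
  let f : C₀(E, ℝ) := g
  have f_integrable (ρ : Measure E) [IsFiniteMeasure ρ] : Integrable f ρ := f.toBCF.integrable ρ
  have hshift (a : E) :
      ∫ x, f (x + a) ∂μ - ∫ x, f (x + a) ∂ν = ∫ x, f x ∂μ - ∫ x, f x ∂ν := by
    have := congrArg (fun ρ ↦ ∫ x, f x ∂ρ) (h a)
    simp only [integral_add_measure (f_integrable _) (f_integrable _),
      integral_map_add_right] at this
    linarith
  have hlim := (tendsto_integral_add_right_cocompact f μ).sub
    (tendsto_integral_add_right_cocompact f ν)
  simp only [hshift, sub_zero] at hlim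
  exact sub_eq_zero.mp (tendsto_nhds_unique tendsto_const_nhds hlim)

end Translates

section FeatureMap

variable {X H : Type*} [NormedAddCommGroup H] [InnerProductSpace ℝ H]

/-- The kernel `k x y = ⟪Φ x, Φ y⟫` of a feature map `Φ` is c₀-universal: the functions
`x ↦ ⟪v, Φ x⟫`, which make up its RKHS, are uniformly dense in `C₀(X, ℝ)`. -/
def IsC0Universal [TopologicalSpace X] (Φ : X → H) : Prop :=
  ∀ (g : C₀(X, ℝ)) (ε : ℝ), 0 < ε → ∃ v : H, ∀ x, |⟪v, Φ x⟫ - g x| ≤ ε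

/-- The kernel of the feature map `Φ` is characteristic: the mean embedding `P ↦ ∫ x, Φ x ∂P` is
injective on probability measures. -/
def IsCharacteristic [MeasurableSpace X] (Φ : X → H) : Prop :=
  ∀ P Q : Measure X, IsProbabilityMeasure P → IsProbabilityMeasure Q →
    ∫ x, Φ x ∂P = ∫ x, Φ x ∂Q → P = Q

/-- The mean embedding `μ ↦ ∫ x, Φ x ∂μ` is injective on finite measures, equivalently on finite
signed measures, which enter through their decompositions `μ - ν`. -/
def SeparatesFiniteMeasures [MeasurableSpace X] (Φ : X → H) : Prop :=
  ∀ μ ν : Measure X, IsFiniteMeasure μ → IsFiniteMeasure ν →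
    ∫ x, Φ x ∂μ = ∫ x, Φ x ∂ν → μ = ν

/-- The bounded continuous functions of the form `x ↦ ⟪v, Φ x⟫`; for bounded continuous `Φ` this is
the whole RKHS, viewed inside `X →ᵇ ℝ`. -/
def boundedFeatureFunctions [TopologicalSpace X] (Φ : X → H) : Submodule ℝ (X →ᵇ ℝ) where
  carrier := {f | ∃ v : H, ∀ x, f x = ⟪v, Φ x⟫}
  zero_mem' := ⟨0, fun x ↦ (inner_zero_left (Φ x)).symm⟩
  add_mem' := by
    rintro f g ⟨v, hv⟩ ⟨w, hw⟩
    exact ⟨v + w, fun x ↦ by rw [BoundedContinuousFunction.add_apply, hv, hw, inner_add_left]⟩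
  smul_mem' := by
    rintro c f ⟨v, hv⟩
    exact ⟨c • v, fun x ↦ by
      rw [BoundedContinuousFunction.smul_apply, hv, smul_eq_mul, real_inner_smul_left]⟩

section Means

variable [MeasurableSpace X] {Φ : X → H}

theorem integral_eq_integral_of_forall_inner_eq [CompleteSpace H] {μ ν : Measure X}
    (hμ : Integrable Φ μ) (hν : Integrable Φ ν)
    (h : ∀ y, ⟪∫ x, Φ x ∂μ, Φ y⟫ = ⟪∫ x, Φ x ∂ν, Φ y⟫) : ∫ x, Φ x ∂μ = ∫ x, Φ x ∂ν := by
  set m := ∫ x, Φ x ∂μ - ∫ x, Φ x ∂ν with hm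
  have hm_orthogonal (y : X) : ⟪m, Φ y⟫ = 0 := by rw [hm, inner_sub_left, h, sub_self]
  have hmm : ⟪m, m⟫ = 0 := by
    calc ⟪m, m⟫ = ∫ x, ⟪m, Φ x⟫ ∂μ - ∫ x, ⟪m, Φ x⟫ ∂ν := by
          rw [integral_inner hμ, integral_inner hν, ← inner_sub_right]
      _ = 0 := by simp only [hm_orthogonal, integral_zero, sub_self]
  exact sub_eq_zero.mp (inner_self_eq_zero.mp hmm)

theorem IsCharacteristic.eq_of_measure_univ_eq (hΦ : IsCharacteristic Φ) {μ ν : Measure X}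
    [IsFiniteMeasure μ] (hmass : μ Set.univ = ν Set.univ) (h : ∫ x, Φ x ∂μ = ∫ x, Φ x ∂ν) :
    μ = ν := by
  obtain rfl | hμ := eq_or_ne μ 0
  · rw [eq_comm, ← Measure.measure_univ_eq_zero, ← hmass, Measure.coe_zero, Pi.zero_apply]
  have hμ0 : μ Set.univ ≠ 0 := Measure.measure_univ_ne_zero.mpr hμ
  have hμt : μ Set.univ ≠ ⊤ := measure_ne_top μ _
  have h_normalized : (μ Set.univ)⁻¹ • μ = (μ Set.univ)⁻¹ • ν :=
    hΦ _ _ ⟨by simp [ENNReal.inv_mul_cancel hμ0 hμt]⟩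
      ⟨by simp [← hmass, ENNReal.inv_mul_cancel hμ0 hμt]⟩
      (by rw [integral_smul_measure, integral_smul_measure, h])
  simpa [smul_smul, ENNReal.mul_inv_cancel hμ0 hμt] using congrArg (μ Set.univ • ·) h_normalized

theorem separatesFiniteMeasures_of_subsingleton [CompleteSpace H] [Subsingleton X] {x₀ : X}
    (hx₀ : Φ x₀ ≠ 0) : SeparatesFiniteMeasures Φ := by
  intro μ ν hμ hν h
  have integral_eq (ρ : Measure X) : ∫ x, Φ x ∂ρ = ρ.real Set.univ • Φ x₀ := by
    rw [← integral_const]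
    exact congrArg _ (funext fun x ↦ congrArg Φ (Subsingleton.elim x x₀))
  have hmass : μ Set.univ = ν Set.univ := by
    rw [integral_eq, integral_eq] at h
    exact (measureReal_eq_measureReal_iff).mp (smul_left_injective ℝ hx₀ h)
  ext s
  exact Subsingleton.set_cases (by simp) hmass s

end Means

section Universality

variable [TopologicalSpace X] {Φ : X → H}

theorem continuous_of_continuous_inner (h : Continuous fun p : X × X ↦ ⟪Φ p.1, Φ p.2⟫) :
    Continuous Φ := by
  have hcont (f g : X → X) (hf : Continuous f) (hg : Continuous g) :
      Continuous fun x ↦ ⟪Φ (f x), Φ (g x)⟫ := h.comp (hf.prodMk hg)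
  refine continuous_iff_continuousAt.mpr fun y ↦ tendsto_iff_norm_sub_tendsto_zero.mpr ?_
  have hnorm : Continuous fun x ↦ ‖Φ x - Φ y‖ := by
    simp only [norm_eq_sqrt_real_inner, inner_sub_left, inner_sub_right]
    fun_prop
  simpa using hnorm.tendsto y

theorem isC0Universal_iff_forall_toBCF_mem_closure (hΦ : Continuous Φ) {C : ℝ}
    (hC : ∀ x, ‖Φ x‖ ≤ C) :
    IsC0Universal Φ ↔
      ∀ g : C₀(X, ℝ), g.toBCF ∈ (boundedFeatureFunctions Φ).topologicalClosure := by
  have hbound (v : H) (x : X) : ‖⟪v, Φ x⟫‖ ≤ ‖v‖ * C :=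
    (norm_inner_le_norm v (Φ x)).trans (by gcongr; exact hC x)
  let featureFunction (v : H) : X →ᵇ ℝ :=
    .ofNormedAddCommGroup (fun x ↦ ⟪v, Φ x⟫) (by fun_prop) (‖v‖ * C) (hbound v)
  refine forall_congr' fun g ↦ ⟨fun h ↦ ?_, fun h ε hε ↦ ?_⟩
  · refine Metric.mem_closure_iff.mpr fun ε hε ↦ ?_
    obtain ⟨v, hv⟩ := h (ε / 2) (half_pos hε)
    refine ⟨featureFunction v, ⟨v, fun _ ↦ rfl⟩, ?_⟩
    rw [dist_comm]
    exact ((BoundedContinuousFunction.dist_le (half_pos hε).le).mpr hv).trans_lt (half_lt_self hε)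
  · obtain ⟨f, ⟨v, hv⟩, hf⟩ := Metric.mem_closure_iff.mp h ε hε
    refine ⟨v, fun x ↦ ?_⟩
    rw [← hv, abs_sub_comm]
    exact (BoundedContinuousFunction.dist_coe_le_dist x).trans hf.le

variable [T2Space X] [LocallyCompactSpace X] [SecondCountableTopology X] [MeasurableSpace X]
  [BorelSpace X] [CompleteSpace H]

theorem isC0Universal_iff_separatesFiniteMeasures (hΦ : Continuous Φ) {C : ℝ}
    (hC : ∀ x, ‖Φ x‖ ≤ C) (hΦ0 : ∀ y, Tendsto (fun x ↦ ⟪Φ y, Φ x⟫) (cocompact X) (𝓝 0)) :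
    IsC0Universal Φ ↔ SeparatesFiniteMeasures Φ := by
  have Φ_integrable (μ : Measure X) [IsFiniteMeasure μ] : Integrable Φ μ :=
    .of_bound hΦ.aestronglyMeasurable C (.of_forall hC)
  rw [isC0Universal_iff_forall_toBCF_mem_closure hΦ hC]
  constructor
  · intro hdense μ ν hμ hν hmean
    have hclosed : IsClosed {f : X →ᵇ ℝ | ∫ x, f x ∂μ = ∫ x, f x ∂ν} :=
      isClosed_eq (continuous_integral_boundedContinuousFunction μ)
        (continuous_integral_boundedContinuousFunction ν)
    have hfeature : ∀ f ∈ boundedFeatureFunctions Φ, ∫ x, f x ∂μ = ∫ x, f x ∂ν := by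
      rintro f ⟨v, hv⟩
      simp only [hv, integral_inner (Φ_integrable _), hmean]
    exact Measure.ext_of_integral_eq_on_compactlySupported fun g ↦
      closure_minimal hfeature hclosed (hdense (g : C₀(X, ℝ)))
  · intro hsep g
    refine mem_topologicalClosure_of_forall_strongDual_eq_zero _ fun L hL ↦ ?_
    obtain ⟨μ, ν, hμ, hν, hLμν⟩ := exists_isFiniteMeasure_integral_sub_eq L
    have hmean : ∫ x, Φ x ∂μ = ∫ x, Φ x ∂ν := by
      refine integral_eq_integral_of_forall_inner_eq (Φ_integrable μ) (Φ_integrable ν) fun y ↦ ?_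
      let κ : C₀(X, ℝ) := ⟨⟨fun x ↦ ⟪Φ y, Φ x⟫, by fun_prop⟩, hΦ0 y⟩
      have hLκ : ∫ x, κ x ∂μ - ∫ x, κ x ∂ν = 0 := by
        rw [← hLμν]
        exact hL _ ⟨Φ y, fun _ ↦ rfl⟩
      rw [real_inner_comm, real_inner_comm (Φ y), ← integral_inner (Φ_integrable μ),
        ← integral_inner (Φ_integrable ν)]
      exact sub_eq_zero.mp hLκ
    rw [hLμν, hsep μ ν hμ hν hmean, sub_self]

end Universality

section TranslationInvariant

variable [AddGroup X] [MeasurableSpace X] [CompleteSpace H] {Φ : X → H}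

theorem integral_map_add_right_eq_of_integral_eq [MeasurableAdd X]
    (hinv : ∀ a x y, ⟪Φ (x + a), Φ (y + a)⟫ = ⟪Φ x, Φ y⟫)
    (hΦ : ∀ (μ : Measure X) [IsFiniteMeasure μ], Integrable Φ μ)
    {μ ν : Measure X} [IsFiniteMeasure μ] [IsFiniteMeasure ν]
    (h : ∫ x, Φ x ∂μ = ∫ x, Φ x ∂ν) (a : X) :
    ∫ x, Φ x ∂μ.map (· + a) = ∫ x, Φ x ∂ν.map (· + a) := by
  have inner_integral_map (ρ : Measure X) [IsFiniteMeasure ρ] (y : X) :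
      ⟪∫ x, Φ x ∂ρ.map (· + a), Φ y⟫ = ⟪∫ x, Φ x ∂ρ, Φ (y - a)⟫ := by
    calc ⟪∫ x, Φ x ∂ρ.map (· + a), Φ y⟫ = ∫ x, ⟪Φ y, Φ (x + a)⟫ ∂ρ := by
          rw [real_inner_comm, ← integral_inner (hΦ _), integral_map_add_right]
      _ = ∫ x, ⟪Φ (y - a), Φ x⟫ ∂ρ := by
          refine integral_congr_ae (.of_forall fun x ↦ ?_)
          simpa only [sub_add_cancel] using hinv a (y - a) x
      _ = ⟪∫ x, Φ x ∂ρ, Φ (y - a)⟫ := by rw [integral_inner (hΦ ρ), real_inner_comm]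
  exact integral_eq_integral_of_forall_inner_eq (hΦ _) (hΦ _) fun y ↦ by
    rw [inner_integral_map, inner_integral_map, h]

variable [TopologicalSpace X] [IsTopologicalAddGroup X] [T2Space X] [LocallyCompactSpace X]
  [SecondCountableTopology X] [BorelSpace X]

theorem IsCharacteristic.separatesFiniteMeasures [NoncompactSpace X] (hchar : IsCharacteristic Φ)
    (hinv : ∀ a x y, ⟪Φ (x + a), Φ (y + a)⟫ = ⟪Φ x, Φ y⟫)
    (hΦ : ∀ (μ : Measure X) [IsFiniteMeasure μ], Integrable Φ μ) : SeparatesFiniteMeasures Φ := by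
  intro μ ν hμ hν h
  refine eq_of_forall_add_map_add_right_eq fun a ↦ ?_
  have map_univ (ρ : Measure X) : ρ.map (· + a) Set.univ = ρ Set.univ := by
    rw [Measure.map_apply (by fun_prop) .univ, Set.preimage_univ]
  have hmass : (μ + ν.map (· + a)) Set.univ = (ν + μ.map (· + a)) Set.univ := by
    rw [Measure.add_apply, Measure.add_apply, map_univ, map_univ, add_comm]
  have hmean : ∫ x, Φ x ∂(μ + ν.map (· + a)) = ∫ x, Φ x ∂(ν + μ.map (· + a)) := by
    rw [integral_add_measure (hΦ _) (hΦ _), integral_add_measure (hΦ _) (hΦ _), h,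
      integral_map_add_right_eq_of_integral_eq hinv hΦ h]
  exact hchar.eq_of_measure_univ_eq hmass hmean

end TranslationInvariant

end FeatureMap

theorem subsingleton_or_noncompactSpace (V : Type*) [NormedAddCommGroup V] [NormedSpace ℝ V] :
    Subsingleton V ∨ NoncompactSpace V :=
  (subsingleton_or_nontrivial V).imp_right fun (_ : Nontrivial V) ↦ NormedSpace.noncompactSpace ℝ V

theorem stmt14_general {X H : Type*} [AddGroup X] [TopologicalSpace X] [IsTopologicalAddGroup X]
    [T2Space X] [LocallyCompactSpace X] [SecondCountableTopology X] [MeasurableSpace X]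
    [BorelSpace X] [NormedAddCommGroup H] [InnerProductSpace ℝ H] [CompleteSpace H]
    (hX : Subsingleton X ∨ NoncompactSpace X) {ψ : X → ℝ} (hψne : ψ ≠ 0) (hψcont : Continuous ψ)
    (hψ0 : Tendsto ψ (cocompact X) (𝓝 0)) {Φ : X → H} (hΦ : ∀ x y, ⟪Φ x, Φ y⟫ = ψ (x - y)) :
    IsC0Universal Φ ↔ IsCharacteristic Φ := by
  have hΦcont : Continuous Φ := continuous_of_continuous_inner (by simp only [hΦ]; fun_prop)
  have hΦnorm (x : X) : ‖Φ x‖ = √(ψ 0) := by rw [norm_eq_sqrt_real_inner, hΦ, sub_self]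
  have hΦ0 (y : X) : Tendsto (fun x ↦ ⟪Φ y, Φ x⟫) (cocompact X) (𝓝 0) := by
    simp only [real_inner_comm _ (Φ y), hΦ]
    exact hψ0.comp (Homeomorph.subRight y).isClosedEmbedding.tendsto_cocompact
  rw [isC0Universal_iff_separatesFiniteMeasures hΦcont (fun x ↦ (hΦnorm x).le) hΦ0]
  refine ⟨fun h P Q hP hQ ↦ h P Q inferInstance inferInstance, fun h ↦ ?_⟩
  obtain hX | hX := hX
  · obtain ⟨x, hx⟩ := Function.ne_iff.mp hψne
    have hΦx : Φ x ≠ 0 := fun h ↦ hx <| by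
      rw [← sub_zero x, ← hΦ, h, inner_zero_left, Pi.zero_apply]
    exact separatesFiniteMeasures_of_subsingleton hΦx
  · exact h.separatesFiniteMeasures (fun a x y ↦ by rw [hΦ, hΦ, add_sub_add_right_eq_sub])
      fun μ _ ↦ .of_bound hΦcont.aestronglyMeasurable _ (.of_forall fun x ↦ (hΦnorm x).le)

/-- Let `ψ : ℝᵈ → ℝ` be a nonzero bounded continuous positive definite
function vanishing at infinity and let `k(x,y) = ψ(x−y)` with RKHS `H`.  Then `k` is
c₀-universal iff `k` is characteristic to the set of all Borel probability measures on
`ℝᵈ`, i.e. `P ↦ ∫ k(·,x) dP(x) = ∫ Φ dP` is injective on Borel probability measures. -/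
theorem stmt14 {d : ℕ}
    (ψ : EuclideanSpace ℝ (Fin d) → ℝ) (hψne : ψ ≠ 0)
    (hψcont : Continuous ψ) (hψbdd : ∃ C : ℝ, ∀ x, |ψ x| ≤ C)
    (hψ0 : Tendsto ψ (cocompact (EuclideanSpace ℝ (Fin d))) (𝓝 0))
    (k : EuclideanSpace ℝ (Fin d) → EuclideanSpace ℝ (Fin d) → ℝ)
    (hkψ : ∀ x y, k x y = ψ (x - y))
    {H : Type*} [NormedAddCommGroup H] [InnerProductSpace ℝ H] [CompleteSpace H]
    (T : H →ₗ[ℝ] (EuclideanSpace ℝ (Fin d) → ℝ)) (hT : Function.Injective T)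
    (Φ : EuclideanSpace ℝ (Fin d) → H)
    (hk : ∀ x y, k x y = ⟪Φ x, Φ y⟫)
    (hrepro : ∀ (f : H) x, T f x = ⟪f, Φ x⟫) :
    (∀ (g : C₀(EuclideanSpace ℝ (Fin d), ℝ)) (ε : ℝ), 0 < ε →
        ∃ f : H, ∀ x, |T f x - g x| ≤ ε) ↔
      (∀ P Q : Measure (EuclideanSpace ℝ (Fin d)),
        IsProbabilityMeasure P → IsProbabilityMeasure Q →
        (∫ x, Φ x ∂P) = (∫ x, Φ x ∂Q) → P = Q) := by
  simpa only [IsC0Universal, IsCharacteristic, hrepro] using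
    stmt14_general (subsingleton_or_noncompactSpace _) hψne hψcont hψ0 fun x y ↦ by rw [← hk, hkψ]
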